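/- arXiv:math/0310216 — 2 statements merged into one kernel-verified Lean document; each statement's English description precedes it below -/
import Mathlib

section
/- Let p, q ≥ 2 be coprime integers. Then Θ_{p,q}(s₁, s₂, (s₁s₂)^{−1}), a priori an element of the field ℚ(s₁, s₂), is a Laurent polynomial in t₁ = s₁² and t₂ = s₂² with integer coefficients; i.e. it lies in the subring ℤ[s₁^{±2}, s₂^{±2}] of ℚ(s₁, s₂). (This is the statement that the 2-loop polynomial of the torus knot T(p,q) is a polynomial with integer coefficients.) -/
/-- `Δ_{p,q}(s) = ((s^{pq} − s^{−pq})(s − s^{−1})) / ((s^p − s^{−p})(s^q − s^{−q}))`,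
the Alexander polynomial of the `(p,q)` torus knot evaluated at `t = s²`. -/
noncomputable def torusDelta {F : Type*} [Field F] (p q : ℕ) (s : F) : F :=
  ((s ^ (p * q) - s⁻¹ ^ (p * q)) * (s - s⁻¹)) / ((s ^ p - s⁻¹ ^ p) * (s ^ q - s⁻¹ ^ q))

/-- `φ_{p,q}(s) = (s^p + s^{−p})/(s^p − s^{−p}) − q·(s^{pq} + s^{−pq})/(s^{pq} − s^{−pq})`. -/
noncomputable def torusPhi {F : Type*} [Field F] (p q : ℕ) (s : F) : F :=
  (s ^ p + s⁻¹ ^ p) / (s ^ p - s⁻¹ ^ p) -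
    (q : F) * ((s ^ (p * q) + s⁻¹ ^ (p * q)) / (s ^ (p * q) - s⁻¹ ^ (p * q)))

/-- `ψ_{p,q}(s) = Δ_{p,q}(s)·φ_{p,q}(s)`. -/
noncomputable def torusPsi {F : Type*} [Field F] (p q : ℕ) (s : F) : F :=
  torusDelta p q s * torusPhi p q s

/-- The 2-loop polynomial of the torus knot `T(p,q)`:
`Θ_{p,q}(s₁,s₂,s₃) = −(1/4)·Σ_{(i,j,k)} ψ_{p,q}(s_i)·ψ_{q,p}(s_j)·Δ_{p,q}(s_k)`,
the sum running over all six permutations `(i,j,k)` of `(1,2,3)`. -/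
noncomputable def torusTheta {F : Type*} [Field F] (p q : ℕ) (s₁ s₂ s₃ : F) : F :=
  -(1/4) * (torusPsi p q s₁ * torusPsi q p s₂ * torusDelta p q s₃
    + torusPsi p q s₁ * torusPsi q p s₃ * torusDelta p q s₂
    + torusPsi p q s₂ * torusPsi q p s₁ * torusDelta p q s₃
    + torusPsi p q s₂ * torusPsi q p s₃ * torusDelta p q s₁
    + torusPsi p q s₃ * torusPsi q p s₁ * torusDelta p q s₂
    + torusPsi p q s₃ * torusPsi q p s₂ * torusDelta p q s₁)

/-- The reduced 2-loop polynomial of the torus knot `T(p,q)`: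
`Θ̂_{p,q}(s) = ψ_{p,q}(s)·ψ_{q,p}(s) / (2(s − s^{−1})²)`. -/
noncomputable def torusThetaHat {F : Type*} [Field F] (p q : ℕ) (s : F) : F :=
  torusPsi p q s * torusPsi q p s / (2 * (s - s⁻¹) ^ 2)

/-- The `q`-analogue `1 + x + ⋯ + x ^ (n - 1)` of the natural number `n`. -/
def qNumber {R : Type*} [CommRing R] (n : ℕ) (x : R) : R := ∑ i ∈ Finset.range n, x ^ i

section CommRing
variable {R : Type*} [CommRing R]

theorem qNumber_mul (n : ℕ) (x : R) : qNumber n x * (x - 1) = x ^ n - 1 := geom_sum_mul x n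

theorem qNumber_succ (n : ℕ) (x : R) : qNumber (n + 1) x = qNumber n x + x ^ n :=
  Finset.sum_range_succ _ _

theorem qNumber_add (m n : ℕ) (x : R) :
    qNumber (m + n) x = qNumber m x + x ^ m * qNumber n x := by
  simp only [qNumber, Finset.sum_range_add, Finset.mul_sum, pow_add]

theorem isCoprime_qNumber {m n : ℕ} (h : Nat.Coprime m n) (x : R) :
    IsCoprime (qNumber m x) (qNumber n x) := by
  induction hk : m + n using Nat.strong_induction_on generalizing m n with
  | _ k ih =>
    subst hk
    wlog hmn : m ≤ n generalizing m n
    · refine (this h.symm (fun k hk a b hab he ↦ ih k (by omega) hab he) (by omega)).symm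
    rcases Nat.eq_zero_or_pos m with rfl | hm
    · obtain rfl : n = 1 := by simpa using h
      simpa [qNumber] using isCoprime_one_right
    · obtain ⟨d, rfl⟩ := Nat.exists_eq_add_of_le hmn
      have h1 : IsCoprime (qNumber m x) (qNumber d x) :=
        ih (m + d) (by omega) (by simpa using h) rfl
      rw [add_comm, qNumber_add, mul_comm]
      exact (IsCoprime.add_mul_left_right_iff).2 h1

theorem sub_one_dvd_qNumber_sub (n : ℕ) (x : R) : x - 1 ∣ qNumber n x - n := by
  have : qNumber n x - n = ∑ i ∈ Finset.range n, (x ^ i - 1) := by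
    simp [qNumber, Finset.sum_sub_distrib]
  rw [this]
  exact Finset.dvd_sum fun i _ ↦ sub_one_dvd_pow_sub_one x i

theorem sub_one_mul_sub_one_dvd (n : ℕ) (x y : R) :
    (x - 1) * (y - 1) ∣ qNumber n x * qNumber n y - n * qNumber n (x * y) := by
  induction n with
  | zero => simp [qNumber]
  | succ n ih =>
    have key : ∑ a ∈ Finset.range n, (x ^ n - x ^ a) * (y ^ n - y ^ a) =
        n * (x ^ n * y ^ n) - x ^ n * qNumber n y - y ^ n * qNumber n x + qNumber n (x * y) := by
      have h (a : ℕ) : (x ^ n - x ^ a) * (y ^ n - y ^ a) =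
          x ^ n * y ^ n - x ^ n * y ^ a - y ^ n * x ^ a + x ^ a * y ^ a := by ring
      simp only [h, qNumber, Finset.mul_sum, mul_pow, Finset.sum_add_distrib,
        Finset.sum_sub_distrib, Finset.sum_const, Finset.card_range, nsmul_eq_mul]
    have hd : ∀ (z : R), ∀ a ∈ Finset.range n, z - 1 ∣ z ^ n - z ^ a := by
      intro z a ha
      obtain ⟨d, rfl⟩ := Nat.exists_eq_add_of_le (Finset.mem_range.1 ha).le
      rw [pow_add, ← mul_sub_one]
      exact (sub_one_dvd_pow_sub_one z d).mul_left _
    have h2 := dvd_sub ih (Finset.dvd_sum fun a ha ↦ mul_dvd_mul (hd x a ha) (hd y a ha))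
    rw [key] at h2
    convert h2 using 1
    simp only [qNumber_succ, mul_pow]
    push_cast
    ring

end CommRing

section Field
variable {F : Type*} [Field F]

/-- `1 / (t ^ p - 1) - q / (t ^ (p * q) - 1)`, so that `torusPhi p q s` is
`2 * torusHalfPhi p q (s ^ 2) - (q - 1)`. -/
def torusHalfPhi (p q : ℕ) (t : F) : F := 1 / (t ^ p - 1) - q / (t ^ (p * q) - 1)

theorem coth_eq {s : F} (hs : s ≠ 0) {n : ℕ} (h : (s ^ 2) ^ n ≠ 1) :
    (s ^ n + s⁻¹ ^ n) / (s ^ n - s⁻¹ ^ n) = 2 * (1 / ((s ^ 2) ^ n - 1)) + 1 := by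
  have h0 : s ^ n ≠ 0 := pow_ne_zero _ hs
  rw [pow_right_comm] at h ⊢
  rw [inv_pow]
  generalize s ^ n = u at *
  have h1 : u ^ 2 - 1 ≠ 0 := sub_ne_zero.2 h
  have h2 : u - u⁻¹ ≠ 0 := by
    intro h3
    apply h1
    field_simp at h3
    simpa using h3
  rw [div_eq_iff h2]
  field_simp
  ring

theorem torusPhi_eq {s : F} (hs : s ≠ 0) {p q : ℕ} (hp : (s ^ 2) ^ p ≠ 1)
    (hpq : (s ^ 2) ^ (p * q) ≠ 1) :
    torusPhi p q s = 2 * torusHalfPhi p q (s ^ 2) - (q - 1) := by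
  rw [torusPhi, coth_eq hs hp, coth_eq hs hpq, torusHalfPhi]
  ring

theorem sub_inv_pow {s : F} (hs : s ≠ 0) (n : ℕ) :
    s ^ n - s⁻¹ ^ n = ((s ^ 2) ^ n - 1) / s ^ n := by
  rw [inv_pow]
  field_simp
  ring

theorem torusDelta_eq {s : F} (hs : s ≠ 0) {p q g : ℕ} (hg : p * q + 1 = p + q + 2 * g)  :
    torusDelta p q s = ((s ^ 2) ^ (p * q) - 1) * (s ^ 2 - 1) /
      (((s ^ 2) ^ p - 1) * ((s ^ 2) ^ q - 1)) * (s ^ 2)⁻¹ ^ g := by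
  have h1 : s - s⁻¹ = (s ^ 2 - 1) / s := by simpa using sub_inv_pow hs 1
  have h2 : s ^ (p * q) * s = s ^ p * s ^ q * (s ^ 2) ^ g := by
    rw [← pow_succ, hg, pow_add, pow_add, pow_mul]
  rw [torusDelta, h1, sub_inv_pow hs, sub_inv_pow hs, sub_inv_pow hs, div_mul_div_comm,
    div_mul_div_comm, h2, inv_pow]
  field_simp

theorem torusDelta_comm (p q : ℕ) (s : F) : torusDelta p q s = torusDelta q p s := by
  simp only [torusDelta, mul_comm]

theorem torusTheta_comm (p q : ℕ) (a b c : F) : torusTheta p q a b c = torusTheta q p a b c := by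
  simp only [torusTheta, torusDelta_comm p q]
  ring

theorem qNumber_mul_torusDelta {s : F} (hs : s ≠ 0) {p q g : ℕ}
    (hg : p * q + 1 = p + q + 2 * g) (h1 : s ^ 2 ≠ 1) (hp : (s ^ 2) ^ p ≠ 1)
    (hq : (s ^ 2) ^ q ≠ 1) :
    qNumber q (s ^ 2) * torusDelta p q s = (s ^ 2)⁻¹ ^ g * qNumber q ((s ^ 2) ^ p) := by
  rw [torusDelta_eq hs hg]
  generalize s ^ 2 = t at *
  have e1 := qNumber_mul q t
  have e2 := qNumber_mul q (t ^ p)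
  rw [← sub_ne_zero] at h1 hp hq
  rw [← pow_mul] at e2
  rw [← e1] at hq ⊢
  rw [← e2]
  have := left_ne_zero_of_mul hq
  field_simp

theorem qNumber_mul_torusDelta_mul_torusHalfPhi {s : F} (hs : s ≠ 0) {p q g : ℕ}
    (hg : p * q + 1 = p + q + 2 * g) (h1 : s ^ 2 ≠ 1) (hp : (s ^ 2) ^ p ≠ 1)
    (hq : (s ^ 2) ^ q ≠ 1) (hpq : (s ^ 2) ^ (p * q) ≠ 1) {N : F}
    (hN : qNumber q ((s ^ 2) ^ p) - q = ((s ^ 2) ^ p - 1) * N) :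
    qNumber q (s ^ 2) * (torusDelta p q s * torusHalfPhi p q (s ^ 2)) = (s ^ 2)⁻¹ ^ g * N := by
  rw [← mul_assoc, qNumber_mul_torusDelta hs hg h1 hp hq, torusHalfPhi]
  generalize s ^ 2 = t at *
  have e2 := qNumber_mul q (t ^ p)
  rw [← sub_ne_zero] at hp hpq
  rw [← pow_mul] at e2
  rw [← e2] at hpq ⊢
  have := left_ne_zero_of_mul hpq
  rw [mul_assoc]
  congr 1
  field_simp
  linear_combination hN

/-- The addition formula behind the cancellation of poles. -/
theorem qNumber_mul_qNumber_mul_add {p : ℕ} {x y M : F} (hx : x ≠ 1) (hy : y ≠ 1)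
    (hxp : x ^ p ≠ 1) (hyp : y ^ p ≠ 1)
    (hM : qNumber p x * qNumber p y - p * qNumber p (x * y) = (x - 1) * (y - 1) * M) :
    qNumber p x * qNumber p y * ((1 / (x - 1) - p / (x ^ p - 1)) +
      (1 / (y - 1) - p / (y ^ p - 1)) - (p - 1)) = (x * y - 1) * M := by
  have ex := qNumber_mul p x
  have ey := qNumber_mul p y
  have ez := qNumber_mul p (x * y)
  rw [← sub_ne_zero] at hx hy hxp hyp
  have ex' : x ^ p = qNumber p x * (x - 1) + 1 := by rw [ex]; ring
  have ey' : y ^ p = qNumber p y * (y - 1) + 1 := by rw [ey]; ring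
  rw [mul_pow, ex', ey'] at ez
  rw [← ex] at hxp ⊢
  rw [← ey] at hyp ⊢
  have hx' := left_ne_zero_of_mul hxp
  have hy' := left_ne_zero_of_mul hyp
  generalize qNumber p x = X at *
  generalize qNumber p y = Y at *
  generalize qNumber p (x * y) = Z at *
  field_simp
  linear_combination (x * y - 1) * hM + p * ez

end Field

theorem map_qNumber {R S : Type*} [CommRing R] [CommRing S] (f : R →+* S) (n : ℕ) (x : R) :
    f (qNumber n x) = qNumber n (f x) := by
  simp [qNumber]

section Subring
variable {F : Type*} [Field F] {R : Subring F}

theorem coe_qNumber (n : ℕ) (x : R) : ((qNumber n x : R) : F) = qNumber n (x : F) :=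
  map_qNumber R.subtype n x

theorem qNumber_mem {x : F} (hx : x ∈ R) (n : ℕ) : qNumber n x ∈ R :=
  sum_mem fun i _ ↦ pow_mem hx i

theorem exists_mem_qNumber_sub {x : F} (hx : x ∈ R) (n : ℕ) :
    ∃ N ∈ R, qNumber n x - n = (x - 1) * N := by
  obtain ⟨N, hN⟩ := sub_one_dvd_qNumber_sub n (⟨x, hx⟩ : R)
  refine ⟨N, N.2, ?_⟩
  simpa [coe_qNumber] using congrArg R.subtype hN

theorem exists_mem_qNumber_mul_sub {x y : F} (hx : x ∈ R) (hy : y ∈ R) (n : ℕ) :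
    ∃ M ∈ R, qNumber n x * qNumber n y - n * qNumber n (x * y) = (x - 1) * (y - 1) * M := by
  obtain ⟨N, hN⟩ := sub_one_mul_sub_one_dvd n (⟨x, hx⟩ : R) ⟨y, hy⟩
  refine ⟨N, N.2, ?_⟩
  simpa [coe_qNumber] using congrArg R.subtype hN

/-- `t` is a unit of `R` which is not a root of unity. -/
structure IsNontorsionUnit (R : Subring F) (t : F) : Prop where
  ne_zero : t ≠ 0
  mem : t ∈ R
  inv_mem : t⁻¹ ∈ R
  pow_ne_one : ∀ n ≠ 0, t ^ n ≠ 1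

/-- Every element of `F` which both `a` and `b` multiply into `R` lies in `R`. -/
def AreSeparated (R : Subring F) (a b : F) : Prop := ∀ x, a * x ∈ R → b * x ∈ R → x ∈ R

theorem AreSeparated.symm {a b : F} (h : AreSeparated R a b) : AreSeparated R b a :=
  fun x hb ha ↦ h x ha hb

theorem AreSeparated.mul_right {a b c : F} (hb : AreSeparated R a b)
    (hc : AreSeparated R a c) (hcR : c ∈ R) : AreSeparated R a (b * c) := fun x hx hbc ↦
  hc x hx <| hb _ (by simpa [mul_left_comm] using mul_mem hcR hx) (by rwa [← mul_assoc])

theorem areSeparated_qNumber {p q : ℕ} (h : Nat.Coprime p q) {t : F} (ht : t ∈ R) :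
    AreSeparated R (qNumber p t) (qNumber q t) := by
  intro x hp hq
  obtain ⟨a, b, hab⟩ := isCoprime_qNumber h (⟨t, ht⟩ : R)
  have hab' : (a : F) * qNumber p t + b * qNumber q t = 1 := by
    simpa [coe_qNumber] using congrArg R.subtype hab
  have : x = a * (qNumber p t * x) + b * (qNumber q t * x) := by
    linear_combination (-x) * hab'
  rw [this]
  exact add_mem (mul_mem a.2 hp) (mul_mem b.2 hq)

variable {p q g : ℕ}

theorem qNumber_mul_torusDelta_mem {s : F} (hs : IsNontorsionUnit R (s ^ 2)) (hp : p ≠ 0)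
    (hq : q ≠ 0) (hg : p * q + 1 = p + q + 2 * g) :
    qNumber q (s ^ 2) * torusDelta p q s ∈ R := by
  rw [qNumber_mul_torusDelta (by simpa using hs.ne_zero) hg (by simpa using hs.pow_ne_one 1)
    (hs.pow_ne_one p hp) (hs.pow_ne_one q hq)]
  exact mul_mem (pow_mem hs.inv_mem _) (qNumber_mem (pow_mem hs.mem _) _)

theorem torusDelta_mem {s : F} (hs : IsNontorsionUnit R (s ^ 2)) (hp : p ≠ 0)
    (hq : q ≠ 0) (hpq : Nat.Coprime p q) (hg : p * q + 1 = p + q + 2 * g) :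
    torusDelta p q s ∈ R := by
  refine areSeparated_qNumber hpq hs.mem _ ?_ (qNumber_mul_torusDelta_mem hs hp hq hg)
  rw [torusDelta_comm]
  exact qNumber_mul_torusDelta_mem hs hq hp (by rw [mul_comm, hg, add_comm q])

theorem qNumber_mul_torusDelta_mul_torusHalfPhi_mem {s : F} (hs : IsNontorsionUnit R (s ^ 2))
    (hp : p ≠ 0) (hq : q ≠ 0) (hg : p * q + 1 = p + q + 2 * g) :
    qNumber q (s ^ 2) * (torusDelta p q s * torusHalfPhi p q (s ^ 2)) ∈ R := by
  obtain ⟨N, hNR, hN⟩ := exists_mem_qNumber_sub (pow_mem hs.mem p) q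
  rw [qNumber_mul_torusDelta_mul_torusHalfPhi (by simpa using hs.ne_zero) hg
    (by simpa using hs.pow_ne_one 1) (hs.pow_ne_one p hp) (hs.pow_ne_one q hq)
    (hs.pow_ne_one _ (mul_ne_zero hp hq)) hN]
  exact mul_mem (pow_mem hs.inv_mem _) hNR

/-- The poles of `torusHalfPhi p q` in `z` at the `q`-th roots of unity cancel in the sum over
the two positions of `torusHalfPhi q p`. -/
theorem qNumber_mul_qNumber_mul_mem {x y z : F} (hx : IsNontorsionUnit R (x ^ 2))
    (hy : IsNontorsionUnit R (y ^ 2)) (hz : IsNontorsionUnit R (z ^ 2)) (hxyz : x * y * z = 1)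
    (hp : p ≠ 0) (hq : q ≠ 0) (hg : p * q + 1 = p + q + 2 * g) :
    qNumber p (x ^ 2) * qNumber p (y ^ 2) *
      (torusDelta p q x * torusDelta p q y * torusDelta p q z * torusHalfPhi p q (z ^ 2) *
        (torusHalfPhi q p (x ^ 2) + torusHalfPhi q p (y ^ 2) - (p - 1))) ∈ R := by
  obtain ⟨M, hMR, hM⟩ := exists_mem_qNumber_mul_sub (pow_mem hx.mem q) (pow_mem hy.mem q) p
  have hg' : q * p + 1 = q + p + 2 * g := by rw [mul_comm, hg, add_comm q]
  have key := qNumber_mul_qNumber_mul_add (hx.pow_ne_one q hq) (hy.pow_ne_one q hq)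
    (by rw [← pow_mul]; exact hx.pow_ne_one _ (mul_ne_zero hq hp))
    (by rw [← pow_mul]; exact hy.pow_ne_one _ (mul_ne_zero hq hp)) hM
  have dx := qNumber_mul_torusDelta (by simpa using hx.ne_zero) hg'
    (by simpa using hx.pow_ne_one 1) (hx.pow_ne_one q hq) (hx.pow_ne_one p hp)
  have dy := qNumber_mul_torusDelta (by simpa using hy.ne_zero) hg'
    (by simpa using hy.pow_ne_one 1) (hy.pow_ne_one q hq) (hy.pow_ne_one p hp)
  rw [torusDelta_comm] at dx dy
  rw [← pow_mul (x ^ 2) q p, ← pow_mul (y ^ 2) q p] at key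
  have hz0 : z ^ 2 ≠ 0 := hz.ne_zero
  have e1 : (x ^ 2) ^ q * (y ^ 2) ^ q = ((z ^ 2)⁻¹) ^ q := by
    rw [← mul_pow, eq_inv_of_mul_eq_one_left (a := x ^ 2 * y ^ 2) (b := z ^ 2)]
    rw [← mul_pow, ← mul_pow, hxyz, one_pow]
  have e2 : (x ^ 2) ^ q * (y ^ 2) ^ q - 1 =
      -((z ^ 2)⁻¹ ^ q * (z ^ 2 - 1)) * qNumber q (z ^ 2) := by
    have := qNumber_mul q (z ^ 2)
    have h2 : (z ^ 2)⁻¹ ^ q * (z ^ 2) ^ q = 1 := by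
      rw [← mul_pow, inv_mul_cancel₀ hz0, one_pow]
    rw [e1]
    linear_combination ((z ^ 2)⁻¹ ^ q) * this + h2
  rw [e2] at key
  have hc := qNumber_mul_torusDelta_mul_torusHalfPhi_mem hz hp hq hg
  have : qNumber p (x ^ 2) * qNumber p (y ^ 2) *
      (torusDelta p q x * torusDelta p q y * torusDelta p q z * torusHalfPhi p q (z ^ 2) *
        (torusHalfPhi q p (x ^ 2) + torusHalfPhi q p (y ^ 2) - (p - 1))) =
      (x ^ 2)⁻¹ ^ g * (y ^ 2)⁻¹ ^ g * (-((z ^ 2)⁻¹ ^ q * (z ^ 2 - 1))) * M *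
        (qNumber q (z ^ 2) * (torusDelta p q z * torusHalfPhi p q (z ^ 2))) := by
    rw [torusHalfPhi.eq_def q p, torusHalfPhi.eq_def q p]
    linear_combination
      (torusDelta p q z * torusHalfPhi p q (z ^ 2)) * (x ^ 2)⁻¹ ^ g * (y ^ 2)⁻¹ ^ g * key +
      (torusDelta p q z * torusHalfPhi p q (z ^ 2)) *
        (1 / ((x ^ 2) ^ q - 1) - p / ((x ^ 2) ^ (q * p) - 1) +
          (1 / ((y ^ 2) ^ q - 1) - p / ((y ^ 2) ^ (q * p) - 1)) - (p - 1)) *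
        (qNumber p (y ^ 2) * torusDelta p q y * dx +
          (x ^ 2)⁻¹ ^ g * qNumber p ((x ^ 2) ^ q) * dy)
  rw [this]
  have i1 := hx.inv_mem
  have i2 := hy.inv_mem
  have i3 := hz.inv_mem
  have i4 := hz.mem
  refine mul_mem (mul_mem (mul_mem (mul_mem (pow_mem i1 _) (pow_mem i2 _)) ?_) hMR) hc
  exact neg_mem (mul_mem (pow_mem i3 _) (sub_mem i4 (one_mem R)))

theorem qNumber_mul_torusTheta_mem [CharZero F] {x y z : F} (hx : IsNontorsionUnit R (x ^ 2))
    (hy : IsNontorsionUnit R (y ^ 2)) (hz : IsNontorsionUnit R (z ^ 2)) (hxyz : x * y * z = 1)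
    (hp : p ≠ 0) (hq : q ≠ 0) (hpq : Nat.Coprime p q) (hg : p * q + 1 = p + q + 2 * g) :
    qNumber p (x ^ 2) * (qNumber p (y ^ 2) * qNumber p (z ^ 2)) * torusTheta p q x y z ∈ R := by
  have hg' : q * p + 1 = q + p + 2 * g := by rw [mul_comm, hg, add_comm q]
  have hgF : ((p : F) - 1) * (q - 1) = 2 * g := by
    have : (p * q + 1 : F) = p + q + 2 * g := mod_cast hg
    linear_combination this
  have hphi {s : F} (hs : IsNontorsionUnit R (s ^ 2)) :
      torusPhi p q s = 2 * torusHalfPhi p q (s ^ 2) - (q - 1) ∧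
      torusPhi q p s = 2 * torusHalfPhi q p (s ^ 2) - (p - 1) :=
    ⟨torusPhi_eq (by simpa using hs.ne_zero) (hs.pow_ne_one p hp)
      (hs.pow_ne_one _ (mul_ne_zero hp hq)),
     torusPhi_eq (by simpa using hs.ne_zero) (hs.pow_ne_one q hq)
      (hs.pow_ne_one _ (mul_ne_zero hq hp))⟩
  have pole {s : F} (hs : IsNontorsionUnit R (s ^ 2)) :
      qNumber p (s ^ 2) * (torusDelta p q s * torusHalfPhi q p (s ^ 2)) ∈ R := by
    rw [torusDelta_comm]
    exact qNumber_mul_torusDelta_mul_torusHalfPhi_mem hs hq hp hg'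
  have px := pole hx
  have py := pole hy
  have pz := pole hz
  have dx := torusDelta_mem hx hp hq hpq hg
  have dy := torusDelta_mem hy hp hq hpq hg
  have dz := torusDelta_mem hz hp hq hpq hg
  have nx := qNumber_mem hx.mem p
  have ny := qNumber_mem hy.mem p
  have nz := qNumber_mem hz.mem p
  have tz := qNumber_mul_qNumber_mul_mem hx hy hz hxyz hp hq hg
  have tx := qNumber_mul_qNumber_mul_mem hy hz hx (by rw [← hxyz]; ring) hp hq hg
  have ty := qNumber_mul_qNumber_mul_mem hz hx hy (by rw [← hxyz]; ring) hp hq hg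
  simp only [torusTheta, torusPsi, torusDelta_comm q p, (hphi hx).1, (hphi hx).2, (hphi hy).1,
    (hphi hy).2, (hphi hz).1, (hphi hz).2]
  generalize torusDelta p q x = Dx at *
  generalize torusDelta p q y = Dy at *
  generalize torusDelta p q z = Dz at *
  generalize torusHalfPhi p q (x ^ 2) = Ax at *
  generalize torusHalfPhi p q (y ^ 2) = Ay at *
  generalize torusHalfPhi p q (z ^ 2) = Az at *
  generalize torusHalfPhi q p (x ^ 2) = Bx at *
  generalize torusHalfPhi q p (y ^ 2) = By at *
  generalize torusHalfPhi q p (z ^ 2) = Bz at *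
  generalize qNumber p (x ^ 2) = Px at *
  generalize qNumber p (y ^ 2) = Py at *
  generalize qNumber p (z ^ 2) = Pz at *
  lift Dx to R using dx
  lift Dy to R using dy
  lift Dz to R using dz
  lift Px to R using nx
  lift Py to R using ny
  lift Pz to R using nz
  have exists_coe {a : F} (ha : a ∈ R) : ∃ b : R, (b : F) = a := ⟨⟨a, ha⟩, rfl⟩
  obtain ⟨bx, hbx⟩ := exists_coe px
  obtain ⟨by', hby⟩ := exists_coe py
  obtain ⟨bz, hbz⟩ := exists_coe pz
  obtain ⟨cx, hcx⟩ := exists_coe tx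
  obtain ⟨cy, hcy⟩ := exists_coe ty
  obtain ⟨cz, hcz⟩ := exists_coe tz
  convert (-(Px * cx + Py * cy + Pz * cz) + (q - 1) * (bx * Dy * Dz * Py * Pz +
    by' * Dx * Dz * Px * Pz + bz * Dx * Dy * Px * Py) -
      (g + g + g) * (Px * Py * Pz * Dx * Dy * Dz) : R).2 using 1
  push_cast
  rw [hbx, hby, hbz, hcx, hcy, hcz]
  linear_combination (-(3 / 2 : F) * (Px * Py * Pz * Dx * Dy * Dz)) * hgF

end Subring

section Transcendental
open Polynomial
variable {F : Type*} [Field F]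

theorem exists_pow_mul_eq_aeval {a b : F} (hb : b ≠ 0) {r : F}
    (hr : r ∈ Subring.closure {a, a⁻¹, b, b⁻¹}) :
    ∃ (n : ℕ) (f : (Subring.closure {a, a⁻¹})[X]), b ^ n * r = aeval b f := by
  induction hr using Subring.closure_induction with
  | mem x hx =>
    have hC (y : F) (hy : y ∈ ({a, a⁻¹} : Set F)) :
        ∃ (n : ℕ) (f : (Subring.closure {a, a⁻¹})[X]), b ^ n * y = aeval b f :=
      ⟨0, C ⟨y, Subring.subset_closure hy⟩, by rw [aeval_C, pow_zero, one_mul]; rfl⟩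
    rcases hx with rfl | rfl | rfl | rfl
    · exact hC _ (by simp)
    · exact hC _ (by simp)
    · exact ⟨0, X, by simp⟩
    · exact ⟨1, 1, by simp [hb]⟩
  | zero => exact ⟨0, 0, by simp⟩
  | one => exact ⟨0, 1, by simp⟩
  | add x y _ _ hx hy =>
    obtain ⟨m, f, hf⟩ := hx
    obtain ⟨n, g, hg⟩ := hy
    refine ⟨m + n, X ^ n * f + X ^ m * g, ?_⟩
    simp only [map_add, map_mul, map_pow, aeval_X, ← hf, ← hg]
    ring
  | neg x _ hx =>
    obtain ⟨m, f, hf⟩ := hx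
    exact ⟨m, -f, by simp [← hf]⟩
  | mul x y _ _ hx hy =>
    obtain ⟨m, f, hf⟩ := hx
    obtain ⟨n, g, hg⟩ := hy
    refine ⟨m + n, f * g, ?_⟩
    simp only [map_mul, ← hf, ← hg]
    ring

theorem aeval_mem_of_le {A R : Subring F} (h : A ≤ R) {b : F} (hb : b ∈ R) (f : A[X]) :
    aeval b f ∈ R := by
  rw [aeval_eq_sum_range]
  exact sum_mem fun i _ ↦ mul_mem (h (f.coeff i).2) (pow_mem hb i)

theorem areSeparated_aeval {a b : F} (hb0 : b ≠ 0)
    (hb : Transcendental (Subring.closure {a, a⁻¹}) b) {c : Subring.closure {a, a⁻¹}}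
    (hc : c ≠ 0) {g : (Subring.closure {a, a⁻¹})[X]} (hg : g.Monic) :
    AreSeparated (Subring.closure {a, a⁻¹, b, b⁻¹}) (c : F) (aeval b g) := by
  intro x hcx hgx
  have hbR : b ∈ Subring.closure {a, a⁻¹, b, b⁻¹} := Subring.subset_closure (by simp)
  have hbR' : b⁻¹ ∈ Subring.closure {a, a⁻¹, b, b⁻¹} := Subring.subset_closure (by simp)
  obtain ⟨m, Z, hZ⟩ := exists_pow_mul_eq_aeval hb0 hcx
  obtain ⟨n, Y, hY⟩ := exists_pow_mul_eq_aeval hb0 hgx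
  have inj := transcendental_iff_injective.1 hb
  have hc' : aeval b (C c) = (c : F) := by rw [aeval_C]; rfl
  have key : c • (X ^ m * Y) = g * (X ^ n * Z) := by
    apply inj
    rw [smul_eq_C_mul]
    simp only [map_mul, map_pow, aeval_X, ← hZ, ← hY, hc']
    ring
  have hdvd : g ∣ X ^ m * Y := by
    rw [← modByMonic_eq_zero_iff_dvd hg]
    have h := (modByMonic_eq_zero_iff_dvd hg).2 (Dvd.intro _ key.symm)
    rw [smul_modByMonic] at h
    exact (smul_eq_zero.1 h).resolve_left hc
  obtain ⟨W, hW⟩ := hdvd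
  have hg0 : aeval b g ≠ 0 := fun h ↦ hg.ne_zero (inj (by simpa using h))
  have hxW : b ^ (m + n) * x = aeval b W := by
    apply mul_left_cancel₀ hg0
    rw [← map_mul, ← hW, map_mul, ← hY, map_pow, aeval_X]
    ring
  have hx : x = b⁻¹ ^ (m + n) * aeval b W := by
    rw [← hxW, inv_pow, inv_mul_cancel_left₀ (pow_ne_zero _ hb0)]
  rw [hx]
  refine mul_mem (pow_mem hbR' _) (aeval_mem_of_le (Subring.closure_mono ?_) hbR W)
  grind

theorem areSeparated_qNumber_of_transcendental [CharZero F] (K : IntermediateField ℚ F)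
    {R : Subring F} {a b : F} (ha : a ∈ K) (hb : Transcendental K b)
    (hR : R = Subring.closure {a, a⁻¹, b, b⁻¹}) {m n : ℕ} (hm : a ^ m ≠ 1) (hn : n ≠ 0) :
    AreSeparated R (qNumber m a) (qNumber n b) := by
  have hle : Subring.closure {a, a⁻¹} ≤ K.toSubring := by
    rw [Subring.closure_le]
    rintro x (rfl | rfl)
    exacts [ha, K.inv_mem ha]
  have hb' : Transcendental (Subring.closure {a, a⁻¹}) b := by
    let _ : Algebra (Subring.closure {a, a⁻¹}) K := (Subring.inclusion hle).toAlgebra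
    have _ : IsScalarTower (Subring.closure {a, a⁻¹}) K F := .of_algebraMap_eq fun _ ↦ rfl
    exact hb.restrictScalars (Subring.inclusion_injective hle)
  have hb0 : b ≠ 0 := by
    rintro rfl
    exact hb isAlgebraic_zero
  have ha' : a ∈ Subring.closure {a, a⁻¹} := Subring.subset_closure (by simp)
  have h := areSeparated_aeval hb0 hb' (c := qNumber m ⟨a, ha'⟩) ?_
    (g := qNumber n X) (monic_geom_sum_X hn)
  · rw [hR]
    convert h using 1
    · rw [coe_qNumber]
    · simp [qNumber]
  · intro h0
    have h1 := congrArg Subtype.val h0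
    rw [coe_qNumber] at h1
    have h2 := qNumber_mul m a
    rw [show qNumber m a = 0 from h1, zero_mul] at h2
    exact hm (sub_eq_zero.1 h2.symm)

theorem isNontorsionUnit_of_transcendental {K : Type*} [Field K] [Algebra K F] {R : Subring F}
    {t : F} (ht : Transcendental K t) (hR : t ∈ R) (hR' : t⁻¹ ∈ R) : IsNontorsionUnit R t where
  ne_zero := by
    rintro rfl
    exact ht isAlgebraic_zero
  mem := hR
  inv_mem := hR'
  pow_ne_one n hn h := ht.pow (Nat.pos_of_ne_zero hn) (h ▸ isAlgebraic_one)

theorem closure_pair_mul_inv {a b : F} (ha : a ≠ 0) :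
    Subring.closure {a, a⁻¹, (a * b)⁻¹, ((a * b)⁻¹)⁻¹} = Subring.closure {a, a⁻¹, b, b⁻¹} := by
  apply le_antisymm <;> rw [Subring.closure_le]
  · have h1 : a ∈ Subring.closure {a, a⁻¹, b, b⁻¹} := Subring.subset_closure (by simp)
    have h2 : a⁻¹ ∈ Subring.closure {a, a⁻¹, b, b⁻¹} := Subring.subset_closure (by simp)
    have h3 : b ∈ Subring.closure {a, a⁻¹, b, b⁻¹} := Subring.subset_closure (by simp)
    have h4 : b⁻¹ ∈ Subring.closure {a, a⁻¹, b, b⁻¹} := Subring.subset_closure (by simp)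
    rintro x (rfl | rfl | rfl | rfl)
    · exact h1
    · exact h2
    · rw [mul_inv]
      exact mul_mem h2 h4
    · rw [inv_inv]
      exact mul_mem h1 h3
  · set S := Subring.closure {a, a⁻¹, (a * b)⁻¹, ((a * b)⁻¹)⁻¹}
    have h1 : a ∈ S := Subring.subset_closure (by simp)
    have h2 : a⁻¹ ∈ S := Subring.subset_closure (by simp)
    have h3 : (a * b)⁻¹ ∈ S := Subring.subset_closure (by simp)
    have h4 : ((a * b)⁻¹)⁻¹ ∈ S := Subring.subset_closure (by simp)
    rintro x (rfl | rfl | rfl | rfl)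
    · exact h1
    · exact h2
    · have := mul_mem h2 h4
      rwa [inv_inv, inv_mul_cancel_left₀ ha] at this
    · have := mul_mem h1 h3
      rwa [mul_inv, mul_inv_cancel_left₀ ha] at this

theorem transcendental_inv_mul {K : Type*} [Field K] [Algebra K F] {a b : F} (ha0 : a ≠ 0)
    (ha : IsAlgebraic K a) (hb : Transcendental K b) : Transcendental K (a * b)⁻¹ := by
  intro h
  have h' := h.inv
  rw [inv_inv] at h'
  exact hb (IsAlgebraic.of_mul (mem_nonZeroDivisors_of_ne_zero ha0) ha h')

theorem exists_mul_add_one_eq {p q : ℕ} (hp : p ≠ 0) (hq : q ≠ 0) (hpq : Nat.Coprime p q) :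
    ∃ g, p * q + 1 = p + q + 2 * g := by
  obtain ⟨m, rfl⟩ := Nat.exists_eq_succ_of_ne_zero hp
  obtain ⟨n, rfl⟩ := Nat.exists_eq_succ_of_ne_zero hq
  have h : Even (m * n) := by
    by_contra h
    rw [Nat.not_even_iff_odd, Nat.odd_mul] at h
    have := Nat.dvd_gcd h.1.add_one.two_dvd h.2.add_one.two_dvd
    rw [show (m + 1).gcd (n + 1) = 1 from hpq] at this
    omega
  obtain ⟨g, hg⟩ := h
  exact ⟨g, by simp only [Nat.succ_eq_add_one]; linear_combination hg⟩

end Transcendental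

/-- For coprime integers `p, q ≥ 2`, the 2-loop polynomial `Θ_{p,q}(s₁, s₂, (s₁s₂)⁻¹)` of
the torus knot `T(p,q)`, a priori an element of the field `ℚ(s₁,s₂)`, lies in the subring
`ℤ[s₁^{±2}, s₂^{±2}]`, i.e. it is a Laurent polynomial in `t₁ = s₁²` and `t₂ = s₂²` with
integer coefficients. -/
theorem torusTheta_is_integer_laurent (p q : ℕ) (hp : 2 ≤ p) (hq : 2 ≤ q)
    (hpq : Nat.Coprime p q) :
    ∀ (s₁ s₂ : FractionRing (MvPolynomial (Fin 2) ℚ)),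
      s₁ = algebraMap (MvPolynomial (Fin 2) ℚ) _ (MvPolynomial.X 0) →
      s₂ = algebraMap (MvPolynomial (Fin 2) ℚ) _ (MvPolynomial.X 1) →
      torusTheta p q s₁ s₂ (s₁ * s₂)⁻¹ ∈
        Subring.closure {s₁ ^ 2, (s₁ ^ 2)⁻¹, s₂ ^ 2, (s₂ ^ 2)⁻¹} := by
  intro s₁ s₂ h₁ h₂
  have hp0 : p ≠ 0 := by omega
  have hq0 : q ≠ 0 := by omega
  obtain ⟨g, hg⟩ := exists_mul_add_one_eq hp0 hq0 hpq
  have hg' : q * p + 1 = q + p + 2 * g := by rw [mul_comm, hg, add_comm q]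
  have hind : AlgebraicIndependent ℚ fun i : Fin 2 ↦
      algebraMap (MvPolynomial (Fin 2) ℚ) (FractionRing (MvPolynomial (Fin 2) ℚ))
        (MvPolynomial.X i) :=
    (MvPolynomial.algebraicIndependent_X (Fin 2) ℚ).map'
      (f := IsScalarTower.toAlgHom ℚ _ (FractionRing (MvPolynomial (Fin 2) ℚ)))
      (IsFractionRing.injective _ _)
  have ht₂ : Transcendental (IntermediateField.adjoin ℚ {s₁}) s₂ := by
    have := hind.transcendental_adjoin (s := {0}) (i := 1) (by simp)
    rw [Set.image_singleton, ← h₁, ← h₂] at this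
    exact IntermediateField.transcendental_adjoin_iff.2 this
  have ht₁ : Transcendental (IntermediateField.adjoin ℚ {s₂}) s₁ := by
    have := hind.transcendental_adjoin (s := {1}) (i := 0) (by simp)
    rw [Set.image_singleton, ← h₁, ← h₂] at this
    exact IntermediateField.transcendental_adjoin_iff.2 this
  clear hind h₁ h₂
  have hs₁ : s₁ ≠ 0 := by rintro rfl; exact ht₁ isAlgebraic_zero
  have hs₂ : s₂ ≠ 0 := by rintro rfl; exact ht₂ isAlgebraic_zero
  have m₁ := IntermediateField.mem_adjoin_simple_self ℚ s₁
  have m₂ := IntermediateField.mem_adjoin_simple_self ℚ s₂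
  have ht₃ : Transcendental (IntermediateField.adjoin ℚ {s₁}) (s₁ * s₂)⁻¹ :=
    transcendental_inv_mul hs₁ (isAlgebraic_algebraMap (⟨s₁, m₁⟩ : IntermediateField.adjoin ℚ {s₁}))
      ht₂
  have ht₃' : Transcendental (IntermediateField.adjoin ℚ {s₂}) (s₁ * s₂)⁻¹ := by
    rw [mul_comm]
    exact transcendental_inv_mul hs₂
      (isAlgebraic_algebraMap (⟨s₂, m₂⟩ : IntermediateField.adjoin ℚ {s₂})) ht₁
  have e : ((s₁ * s₂)⁻¹) ^ 2 = (s₁ ^ 2 * s₂ ^ 2)⁻¹ := by rw [inv_pow, mul_pow]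
  set R := Subring.closure {s₁ ^ 2, (s₁ ^ 2)⁻¹, s₂ ^ 2, (s₂ ^ 2)⁻¹} with hR
  have hR₁ : R = Subring.closure {s₁ ^ 2, (s₁ ^ 2)⁻¹, ((s₁ * s₂)⁻¹) ^ 2, (((s₁ * s₂)⁻¹) ^ 2)⁻¹} := by
    rw [e, closure_pair_mul_inv (pow_ne_zero 2 hs₁)]
  have hR₂ : R = Subring.closure {s₂ ^ 2, (s₂ ^ 2)⁻¹, ((s₁ * s₂)⁻¹) ^ 2, (((s₁ * s₂)⁻¹) ^ 2)⁻¹} := by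
    rw [e, mul_comm, closure_pair_mul_inv (pow_ne_zero 2 hs₂), hR]
    congr 1
    grind
  have u₁ : IsNontorsionUnit R (s₁ ^ 2) := isNontorsionUnit_of_transcendental (ht₁.pow two_pos)
    (Subring.subset_closure (by simp)) (Subring.subset_closure (by simp))
  have u₂ : IsNontorsionUnit R (s₂ ^ 2) := isNontorsionUnit_of_transcendental (ht₂.pow two_pos)
    (Subring.subset_closure (by simp)) (Subring.subset_closure (by simp))
  have u₃ : IsNontorsionUnit R ((s₁ * s₂)⁻¹ ^ 2) := by
    refine isNontorsionUnit_of_transcendental (ht₃.pow two_pos) ?_ ?_ <;> rw [hR₁] <;>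
      exact Subring.subset_closure (by simp)
  have prod_one : s₁ * s₂ * (s₁ * s₂)⁻¹ = 1 := mul_inv_cancel₀ (mul_ne_zero hs₁ hs₂)
  have hP := qNumber_mul_torusTheta_mem u₁ u₂ u₃ prod_one hp0 hq0 hpq hg
  have hQ := qNumber_mul_torusTheta_mem u₁ u₂ u₃ prod_one hq0 hp0 hpq.symm hg'
  rw [torusTheta_comm] at hQ
  have s12 {m n : ℕ} (hm : m ≠ 0) (hn : n ≠ 0) :=
    areSeparated_qNumber_of_transcendental _ (pow_mem m₁ 2) (ht₂.pow two_pos) hR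
      (u₁.pow_ne_one m hm) hn
  have s13 {m n : ℕ} (hm : m ≠ 0) (hn : n ≠ 0) :=
    areSeparated_qNumber_of_transcendental _ (pow_mem m₁ 2) (ht₃.pow two_pos) hR₁
      (u₁.pow_ne_one m hm) hn
  have s23 {m n : ℕ} (hm : m ≠ 0) (hn : n ≠ 0) :=
    areSeparated_qNumber_of_transcendental _ (pow_mem m₂ 2) (ht₃'.pow two_pos) hR₂
      (u₂.pow_ne_one m hm) hn
  have n₁ (n : ℕ) := qNumber_mem u₁.mem n
  have n₂ (n : ℕ) := qNumber_mem u₂.mem n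
  have n₃ (n : ℕ) := qNumber_mem u₃.mem n
  have row {a : FractionRing (MvPolynomial (Fin 2) ℚ)}
      (h1 : AreSeparated R a (qNumber q (s₁ ^ 2))) (h2 : AreSeparated R a (qNumber q (s₂ ^ 2)))
      (h3 : AreSeparated R a (qNumber q ((s₁ * s₂)⁻¹ ^ 2))) :=
    (h1.mul_right (h2.mul_right h3 (n₃ q)) (mul_mem (n₂ q) (n₃ q))).symm
  exact ((row (areSeparated_qNumber hpq u₁.mem) (s12 hp0 hq0) (s13 hp0 hq0)).mul_right
    ((row (s12 hq0 hp0).symm (areSeparated_qNumber hpq u₂.mem) (s23 hp0 hq0)).mul_right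
      (row (s13 hq0 hp0).symm (s23 hq0 hp0).symm (areSeparated_qNumber hpq u₃.mem)) (n₃ p))
    (mul_mem (n₂ p) (n₃ p))) _ hQ hP
end

section
/- Let p ≥ 2 be an integer coprime to 3. In ℚ(s₁, s₂), writing t_i = s_i² and s₃ = (s₁s₂)^{−1}, t₃ = s₃², the following identity holds: Θ_{p,3}(s₁, s₂, s₃) = ((t₁−1)(t₂−1)(t₃−1)/((t₁³−1)(t₂³−1)(t₃³−1))) · ( (p−1)·( t₁^p + t₁^{−p} + t₂^p + t₂^{−p} + t₃^p + t₃^{−p} + t₁^{2p} + t₁^{−2p} + t₂^{2p} + t₂^{−2p} + t₃^{2p} + t₃^{−2p} + t₁^{2p}t₂^p + t₁^{−2p}t₂^{−p} + t₁^{p}t₂^{2p} + t₁^{−p}t₂^{−2p} + t₁^{p}t₂^{−p} + t₁^{−p}t₂^{p} ) − ((s₁^{3(p−1)} − s₁^{−3(p−1)})/(s₁³ − s₁^{−3}))·(2s₁^p + 2s₁^{−p} + s₂^p s₃^{−p} + s₂^{−p} s₃^{p}) − ((s₂^{3(p−1)} − s₂^{−3(p−1)})/(s₂³ − s₂^{−3}))·(2s₂^p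 + 2s₂^{−p} + s₁^p s₃^{−p} + s₁^{−p} s₃^{p}) − ((s₃^{3(p−1)} − s₃^{−3(p−1)})/(s₃³ − s₃^{−3}))·(2s₃^p + 2s₃^{−p} + s₁^p s₂^{−p} + s₁^{−p} s₂^{p}) ). -/
section TorusKnotThree

variable {F : Type*} [Field F]

theorem sub_inv_ne_zero_of_sq_ne_one {x : F} (hx : x ≠ 0) (h : x ^ 2 ≠ 1) : x - x⁻¹ ≠ 0 := by
  intro h0
  apply h
  field_simp at h0
  linear_combination h0

theorem torusDelta_three (p : ℕ) {s : F} (hs : s ≠ 0) (hp : s ^ p - (s ^ p)⁻¹ ≠ 0) :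
    torusDelta p 3 s =
      (s - s⁻¹) / (s ^ 3 - s⁻¹ ^ 3) * ((s ^ p) ^ 2 + 1 + (s ^ p)⁻¹ ^ 2) := by
  have ha : s ^ p ≠ 0 := pow_ne_zero _ hs
  simp only [torusDelta, pow_mul, inv_pow s p]
  generalize s ^ p = a at *
  have e : a ^ 3 - a⁻¹ ^ 3 = (a - a⁻¹) * (a ^ 2 + 1 + a⁻¹ ^ 2) := by
    field_simp
    ring
  rw [e, mul_assoc, mul_div_mul_left _ _ hp]
  ring

theorem torusPsi_three_right (p : ℕ) {s : F} (hs : s ≠ 0) (hp : s ^ p - (s ^ p)⁻¹ ≠ 0)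
    (hp3 : (s ^ p) ^ 3 - (s ^ p)⁻¹ ^ 3 ≠ 0) :
    torusPsi p 3 s =
      (s - s⁻¹) / (s ^ 3 - s⁻¹ ^ 3) * (-2 * ((s ^ p) ^ 2 - (s ^ p)⁻¹ ^ 2)) := by
  have ha : s ^ p ≠ 0 := pow_ne_zero _ hs
  rw [torusPsi, torusDelta_three p hs hp, mul_assoc]
  simp only [torusPhi, pow_mul, inv_pow s p]
  congr 1
  generalize s ^ p = a at *
  have e : a ^ 3 - a⁻¹ ^ 3 = (a - a⁻¹) * (a ^ 2 + 1 + a⁻¹ ^ 2) := by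
    field_simp
    ring
  rw [e] at hp3 ⊢
  have hd := right_ne_zero_of_mul hp3
  have hcancel : (a ^ 2 + 1 + a⁻¹ ^ 2) *
      ((a ^ 3 + a⁻¹ ^ 3) / ((a - a⁻¹) * (a ^ 2 + 1 + a⁻¹ ^ 2))) =
        (a ^ 3 + a⁻¹ ^ 3) / (a - a⁻¹) := by
    generalize a ^ 2 + 1 + a⁻¹ ^ 2 = d at *
    generalize a - a⁻¹ = v at *
    field_simp
  rw [mul_sub, mul_left_comm, hcancel, ← mul_div_assoc, ← mul_div_assoc, ← sub_div,
    div_eq_iff hp]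
  field_simp
  ring

theorem torusPsi_three_left (p : ℕ) {s : F} (hs : s ≠ 0) (hp : s ^ p - (s ^ p)⁻¹ ≠ 0)
    (hp3 : (s ^ p) ^ 3 - (s ^ p)⁻¹ ^ 3 ≠ 0) :
    torusPsi 3 p s =
      (s - s⁻¹) / (s ^ 3 - s⁻¹ ^ 3) *
        (((s ^ p) ^ 2 + 1 + (s ^ p)⁻¹ ^ 2) * ((s ^ 3 + s⁻¹ ^ 3) / (s ^ 3 - s⁻¹ ^ 3)) -
          p * (((s ^ p) ^ 3 + (s ^ p)⁻¹ ^ 3) / (s ^ p - (s ^ p)⁻¹))) := by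
  have ha : s ^ p ≠ 0 := pow_ne_zero _ hs
  rw [torusPsi, torusDelta_comm, torusDelta_three p hs hp, mul_assoc]
  simp only [torusPhi, mul_comm 3 p, pow_mul, inv_pow s p]
  congr 1
  generalize s ^ p = a at *
  have e : a ^ 3 - a⁻¹ ^ 3 = (a - a⁻¹) * (a ^ 2 + 1 + a⁻¹ ^ 2) := by
    field_simp
    ring
  rw [e] at hp3 ⊢
  have hd := right_ne_zero_of_mul hp3
  generalize a ^ 2 + 1 + a⁻¹ ^ 2 = d at *
  generalize a - a⁻¹ = v at *
  field_simp

theorem pow_three_mul_pred_sub_inv_div [CharZero F] {p : ℕ} (hp : 1 ≤ p) {s : F} (hs : s ≠ 0)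
    (hu : s ^ 3 - s⁻¹ ^ 3 ≠ 0) :
    (s ^ (3 * (p - 1)) - s⁻¹ ^ (3 * (p - 1))) / (s ^ 3 - s⁻¹ ^ 3) =
      ((s ^ p) ^ 3 - (s ^ p)⁻¹ ^ 3) / 2 * ((s ^ 3 + s⁻¹ ^ 3) / (s ^ 3 - s⁻¹ ^ 3)) -
        ((s ^ p) ^ 3 + (s ^ p)⁻¹ ^ 3) / 2 := by
  obtain ⟨n, rfl⟩ := Nat.exists_eq_add_of_le' hp
  have hn : s ^ n ≠ 0 := pow_ne_zero _ hs
  rw [div_eq_iff hu, sub_mul, mul_assoc, div_mul_cancel₀ _ hu]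
  simp only [Nat.add_sub_cancel, mul_comm 3 n, pow_mul, pow_succ s n, inv_pow s n]
  generalize s ^ n = a at *
  field_simp
  ring

theorem sq_sub_inv_sq_mul_add {a b c : F} (ha : a ≠ 0) (hb : b ≠ 0) (hc : c ≠ 0)
    (h : a * b * c = 1) :
    (b ^ 2 - b⁻¹ ^ 2) * (c ^ 2 + 1 + c⁻¹ ^ 2) + (c ^ 2 - c⁻¹ ^ 2) * (b ^ 2 + 1 + b⁻¹ ^ 2) =
      -((a - a⁻¹) * (2 * a + 2 * a⁻¹ + b * c⁻¹ + b⁻¹ * c)) := by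
  obtain rfl : a = (b * c)⁻¹ := eq_inv_of_mul_eq_one_left (by rw [← mul_assoc, h])
  field_simp
  ring

theorem torus_laurent_sum [CharZero F] {a b c : F} (ha : a ≠ 0) (hb : b ≠ 0)
    (hc : c = (a * b)⁻¹) :
    a ^ 2 + a⁻¹ ^ 2 + b ^ 2 + b⁻¹ ^ 2 + c ^ 2 + c⁻¹ ^ 2
        + a ^ 4 + a⁻¹ ^ 4 + b ^ 4 + b⁻¹ ^ 4 + c ^ 4 + c⁻¹ ^ 4
        + a ^ 4 * b ^ 2 + a⁻¹ ^ 4 * b⁻¹ ^ 2 + a ^ 2 * b ^ 4 + a⁻¹ ^ 2 * b⁻¹ ^ 4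
        + a ^ 2 * b⁻¹ ^ 2 + a⁻¹ ^ 2 * b ^ 2 =
      ((a ^ 3 + a⁻¹ ^ 3) * (2 * a + 2 * a⁻¹ + b * c⁻¹ + b⁻¹ * c)
        + (b ^ 3 + b⁻¹ ^ 3) * (2 * b + 2 * b⁻¹ + a * c⁻¹ + a⁻¹ * c)
        + (c ^ 3 + c⁻¹ ^ 3) * (2 * c + 2 * c⁻¹ + a * b⁻¹ + a⁻¹ * b)) / 2 := by
  subst hc
  field_simp
  ring

theorem sub_inv_div_pow_three_sub_inv {s : F} (hs : s ≠ 0) :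
    (s - s⁻¹) / (s ^ 3 - s⁻¹ ^ 3) = s ^ 2 * ((s ^ 2 - 1) / ((s ^ 2) ^ 3 - 1)) := by
  have h1 : s - s⁻¹ = s⁻¹ ^ 3 * (s ^ 2 * (s ^ 2 - 1)) := by
    field_simp
  have h2 : s ^ 3 - s⁻¹ ^ 3 = s⁻¹ ^ 3 * ((s ^ 2) ^ 3 - 1) := by
    field_simp
  rw [h1, h2, mul_div_mul_left _ _ (pow_ne_zero _ (inv_ne_zero hs)), mul_div_assoc]

theorem torusTheta_three_formula [CharZero F] {p : ℕ} (hp : 1 ≤ p) {s₁ s₂ s₃ : F}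
    (hs₁ : s₁ ≠ 0) (hs₂ : s₂ ≠ 0) (hs₃ : s₃ = (s₁ * s₂)⁻¹)
    (h₁ : ∀ n, n ≠ 0 → s₁ ^ n ≠ 1) (h₂ : ∀ n, n ≠ 0 → s₂ ^ n ≠ 1)
    (h₃ : ∀ n, n ≠ 0 → s₃ ^ n ≠ 1) :
    torusTheta p 3 s₁ s₂ s₃ =
      ((s₁ ^ 2 - 1) * (s₂ ^ 2 - 1) * (s₃ ^ 2 - 1) /
          (((s₁ ^ 2) ^ 3 - 1) * ((s₂ ^ 2) ^ 3 - 1) * ((s₃ ^ 2) ^ 3 - 1))) *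
        (((p : F) - 1) *
            ((s₁ ^ 2) ^ p + (s₁ ^ 2)⁻¹ ^ p + (s₂ ^ 2) ^ p + (s₂ ^ 2)⁻¹ ^ p
              + (s₃ ^ 2) ^ p + (s₃ ^ 2)⁻¹ ^ p
              + (s₁ ^ 2) ^ (2 * p) + (s₁ ^ 2)⁻¹ ^ (2 * p)
              + (s₂ ^ 2) ^ (2 * p) + (s₂ ^ 2)⁻¹ ^ (2 * p)
              + (s₃ ^ 2) ^ (2 * p) + (s₃ ^ 2)⁻¹ ^ (2 * p)
              + (s₁ ^ 2) ^ (2 * p) * (s₂ ^ 2) ^ p + (s₁ ^ 2)⁻¹ ^ (2 * p) * (s₂ ^ 2)⁻¹ ^ p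
              + (s₁ ^ 2) ^ p * (s₂ ^ 2) ^ (2 * p) + (s₁ ^ 2)⁻¹ ^ p * (s₂ ^ 2)⁻¹ ^ (2 * p)
              + (s₁ ^ 2) ^ p * (s₂ ^ 2)⁻¹ ^ p + (s₁ ^ 2)⁻¹ ^ p * (s₂ ^ 2) ^ p) -
          ((s₁ ^ (3 * (p - 1)) - s₁⁻¹ ^ (3 * (p - 1))) / (s₁ ^ 3 - s₁⁻¹ ^ 3)) *
            (2 * s₁ ^ p + 2 * s₁⁻¹ ^ p + s₂ ^ p * s₃⁻¹ ^ p + s₂⁻¹ ^ p * s₃ ^ p) -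
          ((s₂ ^ (3 * (p - 1)) - s₂⁻¹ ^ (3 * (p - 1))) / (s₂ ^ 3 - s₂⁻¹ ^ 3)) *
            (2 * s₂ ^ p + 2 * s₂⁻¹ ^ p + s₁ ^ p * s₃⁻¹ ^ p + s₁⁻¹ ^ p * s₃ ^ p) -
          ((s₃ ^ (3 * (p - 1)) - s₃⁻¹ ^ (3 * (p - 1))) / (s₃ ^ 3 - s₃⁻¹ ^ 3)) *
            (2 * s₃ ^ p + 2 * s₃⁻¹ ^ p + s₁ ^ p * s₂⁻¹ ^ p + s₁⁻¹ ^ p * s₂ ^ p)) := by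
  have hp0 : p ≠ 0 := by lia
  have hs₃0 : s₃ ≠ 0 := by
    rw [hs₃]
    exact inv_ne_zero (mul_ne_zero hs₁ hs₂)
  have hvp : ∀ s : F, s ≠ 0 → (∀ n, n ≠ 0 → s ^ n ≠ 1) → ∀ n, n ≠ 0 →
      s ^ n - (s ^ n)⁻¹ ≠ 0 := fun s hs h n hn =>
    sub_inv_ne_zero_of_sq_ne_one (pow_ne_zero _ hs) (by
      rw [← pow_mul]
      exact h _ (by positivity))
  have hv3 : ∀ s : F, s ≠ 0 → (∀ n, n ≠ 0 → s ^ n ≠ 1) → s ^ 3 - s⁻¹ ^ 3 ≠ 0 :=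
    fun s hs h => by simpa only [inv_pow] using hvp s hs h 3 (by norm_num)
  have hvp3 : ∀ s : F, s ≠ 0 → (∀ n, n ≠ 0 → s ^ n ≠ 1) →
      (s ^ p) ^ 3 - (s ^ p)⁻¹ ^ 3 ≠ 0 := fun s hs h => by
    simpa only [inv_pow, ← pow_mul] using hvp s hs h (p * 3) (by positivity)
  have hK : (s₁ ^ 2 - 1) * (s₂ ^ 2 - 1) * (s₃ ^ 2 - 1) /
      (((s₁ ^ 2) ^ 3 - 1) * ((s₂ ^ 2) ^ 3 - 1) * ((s₃ ^ 2) ^ 3 - 1)) =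
      (s₁ - s₁⁻¹) / (s₁ ^ 3 - s₁⁻¹ ^ 3) * ((s₂ - s₂⁻¹) / (s₂ ^ 3 - s₂⁻¹ ^ 3)) *
        ((s₃ - s₃⁻¹) / (s₃ ^ 3 - s₃⁻¹ ^ 3)) := by
    have hprod : s₁ * s₂ * s₃ = 1 := by
      rw [hs₃, mul_inv_cancel₀ (mul_ne_zero hs₁ hs₂)]
    rw [sub_inv_div_pow_three_sub_inv hs₁, sub_inv_div_pow_three_sub_inv hs₂,
      sub_inv_div_pow_three_sub_inv hs₃0, mul_div_mul_comm, mul_div_mul_comm]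
    generalize (s₁ ^ 2 - 1) / ((s₁ ^ 2) ^ 3 - 1) = k₁
    generalize (s₂ ^ 2 - 1) / ((s₂ ^ 2) ^ 3 - 1) = k₂
    generalize (s₃ ^ 2 - 1) / ((s₃ ^ 2) ^ 3 - 1) = k₃
    linear_combination -(k₁ * k₂ * k₃) * (s₁ * s₂ * s₃ + 1) * hprod
  have hv₁ := hvp s₁ hs₁ h₁ p hp0
  have hv₂ := hvp s₂ hs₂ h₂ p hp0
  have hv₃ := hvp s₃ hs₃0 h₃ p hp0
  have ha := pow_ne_zero p hs₁
  have hb := pow_ne_zero p hs₂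
  have hc := pow_ne_zero p hs₃0
  have hcab : s₃ ^ p = (s₁ ^ p * s₂ ^ p)⁻¹ := by rw [hs₃, inv_pow, mul_pow]
  rw [hK, torusTheta, torusDelta_three p hs₁ hv₁, torusDelta_three p hs₂ hv₂,
    torusDelta_three p hs₃0 hv₃, torusPsi_three_right p hs₁ hv₁ (hvp3 _ hs₁ h₁),
    torusPsi_three_right p hs₂ hv₂ (hvp3 _ hs₂ h₂),
    torusPsi_three_right p hs₃0 hv₃ (hvp3 _ hs₃0 h₃),
    torusPsi_three_left p hs₁ hv₁ (hvp3 _ hs₁ h₁),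
    torusPsi_three_left p hs₂ hv₂ (hvp3 _ hs₂ h₂),
    torusPsi_three_left p hs₃0 hv₃ (hvp3 _ hs₃0 h₃),
    pow_three_mul_pred_sub_inv_div hp hs₁ (hv3 _ hs₁ h₁),
    pow_three_mul_pred_sub_inv_div hp hs₂ (hv3 _ hs₂ h₂),
    pow_three_mul_pred_sub_inv_div hp hs₃0 (hv3 _ hs₃0 h₃)]
  have e1 : ∀ s : F, (s ^ 2) ^ p = (s ^ p) ^ 2 := fun s => pow_right_comm s 2 p
  have e2 : ∀ s : F, (s ^ 2) ^ (2 * p) = (s ^ p) ^ 4 := fun s => by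
    rw [← pow_mul, ← pow_mul]
    congr 1
    ring
  simp only [← inv_pow _ 2, e1, e2]
  simp only [inv_pow _ p]
  generalize (s₁ - s₁⁻¹) / (s₁ ^ 3 - s₁⁻¹ ^ 3) = k₁
  generalize (s₂ - s₂⁻¹) / (s₂ ^ 3 - s₂⁻¹ ^ 3) = k₂
  generalize (s₃ - s₃⁻¹) / (s₃ ^ 3 - s₃⁻¹ ^ 3) = k₃
  generalize (s₁ ^ 3 + s₁⁻¹ ^ 3) / (s₁ ^ 3 - s₁⁻¹ ^ 3) = w₁
  generalize (s₂ ^ 3 + s₂⁻¹ ^ 3) / (s₂ ^ 3 - s₂⁻¹ ^ 3) = w₂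
  generalize (s₃ ^ 3 + s₃⁻¹ ^ 3) / (s₃ ^ 3 - s₃⁻¹ ^ 3) = w₃
  generalize s₁ ^ p = a at *
  generalize s₂ ^ p = b at *
  generalize s₃ ^ p = c at *
  have habc : a * b * c = 1 := by rw [hcab, mul_inv_cancel₀ (mul_ne_zero ha hb)]
  have l₁ := sq_sub_inv_sq_mul_add ha hb hc habc
  have l₂ := sq_sub_inv_sq_mul_add hb ha hc (by rw [← habc]; ring)
  have l₃ := sq_sub_inv_sq_mul_add hc ha hb (by rw [← habc]; ring)
  rw [torus_laurent_sum ha hb hcab]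
  have factor : ∀ x : F, x ≠ 0 →
      x ^ 3 - x⁻¹ ^ 3 = (x - x⁻¹) * (x ^ 2 + 1 + x⁻¹ ^ 2) := fun x hx => by
    field_simp
    ring
  rw [factor a ha, factor b hb, factor c hc]
  have g₁ := div_mul_cancel₀ (a ^ 3 + a⁻¹ ^ 3) hv₁
  have g₂ := div_mul_cancel₀ (b ^ 3 + b⁻¹ ^ 3) hv₂
  have g₃ := div_mul_cancel₀ (c ^ 3 + c⁻¹ ^ 3) hv₃
  generalize (a ^ 3 + a⁻¹ ^ 3) / (a - a⁻¹) = q₁ at *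
  generalize (b ^ 3 + b⁻¹ ^ 3) / (b - b⁻¹) = q₂ at *
  generalize (c ^ 3 + c⁻¹ ^ 3) / (c - c⁻¹) = q₃ at *
  generalize a ^ 3 + a⁻¹ ^ 3 = m₁ at *
  generalize b ^ 3 + b⁻¹ ^ 3 = m₂ at *
  generalize c ^ 3 + c⁻¹ ^ 3 = m₃ at *
  generalize 2 * a + 2 * a⁻¹ + b * c⁻¹ + b⁻¹ * c = n₁ at *
  generalize 2 * b + 2 * b⁻¹ + a * c⁻¹ + a⁻¹ * c = n₂ at *
  generalize 2 * c + 2 * c⁻¹ + a * b⁻¹ + a⁻¹ * b = n₃ at *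
  generalize a ^ 2 + 1 + a⁻¹ ^ 2 = d₁ at *
  generalize b ^ 2 + 1 + b⁻¹ ^ 2 = d₂ at *
  generalize c ^ 2 + 1 + c⁻¹ ^ 2 = d₃ at *
  generalize a ^ 2 - a⁻¹ ^ 2 = f₁ at *
  generalize b ^ 2 - b⁻¹ ^ 2 = f₂ at *
  generalize c ^ 2 - c⁻¹ ^ 2 = f₃ at *
  linear_combination k₁ * k₂ * k₃ / 2 * ((d₁ * w₁ - p * q₁) * l₁ + (d₂ * w₂ - p * q₂) * l₂ +
    (d₃ * w₃ - p * q₃) * l₃ + p * (n₁ * g₁ + n₂ * g₂ + n₃ * g₃))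

end TorusKnotThree

theorem MvPolynomial.algebraMap_X_pow_ne_one (i : Fin 2) (n : ℕ) (hn : n ≠ 0) :
    (algebraMap (MvPolynomial (Fin 2) ℚ) (FractionRing (MvPolynomial (Fin 2) ℚ)) (X i)) ^ n ≠
      1 := by
  rw [← map_pow, ← map_one (algebraMap (MvPolynomial (Fin 2) ℚ) _)]
  intro h
  have := congrArg (eval fun _ => 2) (IsFractionRing.injective (MvPolynomial (Fin 2) ℚ) _ h)
  simp only [map_pow, eval_X, map_one] at this
  exact (one_lt_pow₀ one_lt_two hn).ne' this

theorem MvPolynomial.algebraMap_X_mul_X_pow_ne_one (i j : Fin 2) (n : ℕ) (hn : n ≠ 0) :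
    (algebraMap (MvPolynomial (Fin 2) ℚ) (FractionRing (MvPolynomial (Fin 2) ℚ)) (X i) *
      algebraMap (MvPolynomial (Fin 2) ℚ) (FractionRing (MvPolynomial (Fin 2) ℚ)) (X j)) ^ n ≠
      1 := by
  rw [← map_mul, ← map_pow, ← map_one (algebraMap (MvPolynomial (Fin 2) ℚ) _)]
  intro h
  have := congrArg (eval fun _ => 2) (IsFractionRing.injective (MvPolynomial (Fin 2) ℚ) _ h)
  simp only [map_pow, map_mul, eval_X, map_one] at this
  exact (one_lt_pow₀ (by norm_num) hn).ne' this

/-- Example: the 2-loop polynomial of the `(p,3)` torus knot, for `p ≥ 2` coprime to `3`,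
as an explicit rational expression in `t_i = s_i²` (with `s₃ = (s₁s₂)⁻¹`). -/
theorem torusTheta_p3_formula (p : ℕ) (hp : 2 ≤ p) (hp3 : Nat.Coprime p 3) :
    ∀ s₁ s₂ : FractionRing (MvPolynomial (Fin 2) ℚ),
      s₁ = algebraMap (MvPolynomial (Fin 2) ℚ) _ (MvPolynomial.X 0) →
      s₂ = algebraMap (MvPolynomial (Fin 2) ℚ) _ (MvPolynomial.X 1) →
      ∀ s₃ t₁ t₂ t₃ : FractionRing (MvPolynomial (Fin 2) ℚ),
        s₃ = (s₁ * s₂)⁻¹ → t₁ = s₁ ^ 2 → t₂ = s₂ ^ 2 → t₃ = s₃ ^ 2 →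
        torusTheta p 3 s₁ s₂ s₃ =
          ((t₁ - 1) * (t₂ - 1) * (t₃ - 1) /
              ((t₁ ^ 3 - 1) * (t₂ ^ 3 - 1) * (t₃ ^ 3 - 1))) *
            (((p : FractionRing (MvPolynomial (Fin 2) ℚ)) - 1) *
                (t₁ ^ p + t₁⁻¹ ^ p + t₂ ^ p + t₂⁻¹ ^ p + t₃ ^ p + t₃⁻¹ ^ p
                  + t₁ ^ (2 * p) + t₁⁻¹ ^ (2 * p) + t₂ ^ (2 * p) + t₂⁻¹ ^ (2 * p)
                  + t₃ ^ (2 * p) + t₃⁻¹ ^ (2 * p)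
                  + t₁ ^ (2 * p) * t₂ ^ p + t₁⁻¹ ^ (2 * p) * t₂⁻¹ ^ p
                  + t₁ ^ p * t₂ ^ (2 * p) + t₁⁻¹ ^ p * t₂⁻¹ ^ (2 * p)
                  + t₁ ^ p * t₂⁻¹ ^ p + t₁⁻¹ ^ p * t₂ ^ p) -
              ((s₁ ^ (3 * (p - 1)) - s₁⁻¹ ^ (3 * (p - 1))) / (s₁ ^ 3 - s₁⁻¹ ^ 3)) *
                (2 * s₁ ^ p + 2 * s₁⁻¹ ^ p + s₂ ^ p * s₃⁻¹ ^ p + s₂⁻¹ ^ p * s₃ ^ p) -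
              ((s₂ ^ (3 * (p - 1)) - s₂⁻¹ ^ (3 * (p - 1))) / (s₂ ^ 3 - s₂⁻¹ ^ 3)) *
                (2 * s₂ ^ p + 2 * s₂⁻¹ ^ p + s₁ ^ p * s₃⁻¹ ^ p + s₁⁻¹ ^ p * s₃ ^ p) -
              ((s₃ ^ (3 * (p - 1)) - s₃⁻¹ ^ (3 * (p - 1))) / (s₃ ^ 3 - s₃⁻¹ ^ 3)) *
                (2 * s₃ ^ p + 2 * s₃⁻¹ ^ p + s₁ ^ p * s₂⁻¹ ^ p + s₁⁻¹ ^ p * s₂ ^ p)) := by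
  intro s₁ s₂ h₁ h₂ s₃ t₁ t₂ t₃ h₃ ht₁ ht₂ ht₃
  have hX : ∀ i : Fin 2, algebraMap (MvPolynomial (Fin 2) ℚ)
      (FractionRing (MvPolynomial (Fin 2) ℚ)) (MvPolynomial.X i) ≠ 0 := fun i => by
    rw [Ne, FaithfulSMul.algebraMap_eq_zero_iff]
    exact MvPolynomial.X_ne_zero i
  subst ht₁ ht₂ ht₃
  refine torusTheta_three_formula (by lia) (h₁ ▸ hX 0) (h₂ ▸ hX 1) h₃
    (h₁ ▸ MvPolynomial.algebraMap_X_pow_ne_one 0)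
    (h₂ ▸ MvPolynomial.algebraMap_X_pow_ne_one 1) fun n hn => ?_
  rw [h₃, inv_pow, Ne, inv_eq_one, h₁, h₂]
  exact MvPolynomial.algebraMap_X_mul_X_pow_ne_one 0 1 n hn
end
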